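/- Let E and H be complex Hilbert spaces and i : E → H an injective continuous linear map with dense range. Let a : E × E → ℂ be a bounded sesquilinear form that is Hermitian (a(u,v) = conj(a(v,u)) for all u, v ∈ E) and coercive on E relative to H: there exist α > 0 and β ≥ 0 such that a(u,u) + β‖i u‖²_H ≥ α‖u‖²_E for all u ∈ E. Let R : H → H be a bounded linear operator and set 𝐜 = (‖2R‖ + √(‖2R‖² + 4β))/2 where ‖2R‖ = 2‖R‖. Then for every real λ > 𝐜 and every g ∈ H there exists u ∈ E such that a(u,v) + λ⟪2R(i u), i v⟫_H + λ²⟪i u, i v⟫_H = ⟪g, i v⟫_H for all v ∈ E. -/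

import Mathlib

open scoped ComplexInnerProductSpace

theorem resolvent_surjectivity
    {E H : Type*}
    [NormedAddCommGroup E] [InnerProductSpace ℂ E] [CompleteSpace E]
    [NormedAddCommGroup H] [InnerProductSpace ℂ H] [CompleteSpace H]
    (i : E →L[ℂ] H) (hinj : Function.Injective i) (hdense : DenseRange i)
    (a : E →L⋆[ℂ] E →L[ℂ] ℂ)
    (herm : ∀ u v : E, a u v = starRingEnd ℂ (a v u))
    (α β : ℝ) (hα : 0 < α) (hβ : 0 ≤ β)
    (hcoer : ∀ u : E, α * ‖u‖ ^ 2 ≤ (a u u).re + β * ‖i u‖ ^ 2)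
    (R : H →L[ℂ] H) :
    ∀ lam : ℝ,
      (‖(2 : ℂ) • R‖ + Real.sqrt (‖(2 : ℂ) • R‖ ^ 2 + 4 * β)) / 2 < lam →
      ∀ g : H, ∃ u : E, ∀ v : E,
        a u v + (lam : ℂ) * ⟪((2 : ℂ) • R) (i u), i v⟫
          + ((lam : ℂ)) ^ 2 * ⟪i u, i v⟫ = ⟪g, i v⟫ := by
  intro lam hlam g
  generalize (2 : ℂ) • R = S at *
  let T : E →L[ℂ] E := InnerProductSpace.continuousLinearMapOfBilin a
    + (lam : ℂ) • (ContinuousLinearMap.adjoint i ∘L S ∘L i)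
    + ((lam : ℂ) ^ 2) • (ContinuousLinearMap.adjoint i ∘L i)
  have hT : ∀ u v, ⟪T u, v⟫ = a u v + (lam : ℂ) * ⟪S (i u), i v⟫
          + ((lam : ℂ)) ^ 2 * ⟪i u, i v⟫ := by
    intro u v
    simp [T, ContinuousLinearMap.adjoint_inner_left]
    ring
  have hs := Real.sq_sqrt (show 0 ≤ ‖S‖ ^ 2 + 4 * β by positivity)
  have hs0 := Real.sqrt_nonneg (‖S‖ ^ 2 + 4 * β)
  have hS := norm_nonneg S
  have hlam0 : 0 ≤ lam := by linarith
  have hkey : β + lam * ‖S‖ ≤ lam ^ 2 := by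
    nlinarith [mul_self_le_mul_self hs0 (show √(‖S‖ ^ 2 + 4 * β) ≤ 2 * lam - ‖S‖ by linarith)]
  have hc : ∀ u, α * ‖u‖ ^ 2 ≤ ‖⟪T u, u⟫‖ := by
    intro u
    refine le_trans ?_ (Complex.re_le_norm _)
    rw [hT]
    have h1 : (a u u + (lam : ℂ) * ⟪S (i u), i u⟫ + ((lam : ℂ)) ^ 2 * ⟪i u, i u⟫).re
        = (a u u).re + lam * (⟪S (i u), i u⟫).re + lam ^ 2 * ‖i u‖ ^ 2 := by
      rw [inner_self_eq_norm_sq_to_K, ← Complex.ofReal_pow]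
      simp [← Complex.ofReal_pow]
    rw [h1]
    have h2 : -(‖S‖ * ‖i u‖ ^ 2) ≤ (⟪S (i u), i u⟫).re := by
      have h3 := Complex.abs_re_le_norm ⟪S (i u), i u⟫
      have h4 := norm_inner_le_norm (𝕜 := ℂ) (S (i u)) (i u)
      have h5 := mul_le_mul_of_nonneg_right (S.le_opNorm (i u)) (norm_nonneg (i u))
      have h6 := neg_abs_le (⟪S (i u), i u⟫).re
      nlinarith
    have h7 := mul_le_mul_of_nonneg_left h2 hlam0
    have h8 := mul_le_mul_of_nonneg_right hkey (sq_nonneg ‖i u‖)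
    have h9 := hcoer u
    nlinarith
  have hunit : IsUnit T := by
    refine ContinuousLinearMap.isUnit_of_forall_le_norm_inner_map T (c := ⟨α, hα.le⟩) hα ?_
    intro u
    have := hc u
    rw [mul_comm] at this
    exact this
  obtain ⟨W, hW⟩ := hunit.exists_right_inv
  refine ⟨W (ContinuousLinearMap.adjoint i g), fun v => ?_⟩
  rw [← hT]
  have : T (W (ContinuousLinearMap.adjoint i g)) = ContinuousLinearMap.adjoint i g :=
    congrArg (fun F : E →L[ℂ] E => F (ContinuousLinearMap.adjoint i g)) hW
  rw [this, ContinuousLinearMap.adjoint_inner_left]
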